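/- Let k be a field, A an associative unital k-algebra, e ∈ A an idempotent, and B a unital subalgebra of e·A·e whose identity element is e. Let M be a right B-module and N a right A-module. If eA = {e·a : a ∈ A} is flat as a left B-module, then for every n ≥ 0 there is an isomorphism Ext^n_A(M ⊗_B eA, N) ≅ Ext^n_B(M, N·e), where N·e = {n·e : n ∈ N} is a right B-module via the B-action inherited from A. -/

import Mathlib

open CategoryTheory MulOpposite ModuleCat

section Infra

variable (k : Type) [Field k] (A : Type) [Ring A] [Algebra k A]
variable (B : Type) [Ring B] [Algebra k B]

/-- The right ideal `eA`, as a `k`-subspace of `A`. -/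
noncomputable def eASub (e : A) : Submodule k A := LinearMap.range (LinearMap.mulLeft k e)

/-- The left ideal `Ae`, as a `k`-subspace of `A`. -/
noncomputable def AeSub (e : A) : Submodule k A := LinearMap.range (LinearMap.mulRight k e)

/-- The subspace `N·ε` of a right `A`-module `N`. -/
noncomputable def NeSub (e : A) (N : ModuleCat Aᵐᵒᵖ) : Submodule k N :=
  Submodule.span k {v : N | ∃ w : N, v = op e • w}

variable {k A B}

theorem op_smul_comm_k (W : ModuleCat Aᵐᵒᵖ) (r : Aᵐᵒᵖ) (c : k) (v : W) :
    r • (c • v) = c • (r • v) := by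
  rw [algebra_compatible_smul Aᵐᵒᵖ c v, algebra_compatible_smul Aᵐᵒᵖ c (r • v),
    smul_smul, smul_smul, Algebra.commutes]

theorem smul_e_mem_NeSub {e : A} (a : A) (N : ModuleCat Aᵐᵒᵖ) (v : N) :
    op (a * e) • v ∈ NeSub k A e N := by
  apply Submodule.subset_span
  exact ⟨op a • v, by rw [smul_smul, ← op_mul]⟩

theorem e_smul_of_mem_NeSub {e : A} (he : e * e = e) (N : ModuleCat Aᵐᵒᵖ) {v : N}
    (hv : v ∈ NeSub k A e N) : op e • v = v := by
  induction hv using Submodule.span_induction with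
  | mem w hw => obtain ⟨m, rfl⟩ := hw; rw [smul_smul, ← op_mul, he]
  | zero => rw [smul_zero]
  | add a b _ _ ha hb => rw [smul_add, ha, hb]
  | smul c a _ ha => rw [op_smul_comm_k, ha]

variable (e : A) (he : e * e = e) (ι : B →ₗ[k] A)

theorem iota_mem_corner (hmul : ∀ x y : B, ι (x * y) = ι x * ι y) (hone : ι 1 = e)
    (b : B) : ι b = e * ι b ∧ ι b = ι b * e := by
  constructor
  · rw [← hone, ← hmul, one_mul]
  · rw [← hone, ← hmul, mul_one]

variable (hmul : ∀ x y : B, ι (x * y) = ι x * ι y) (hone : ι 1 = e)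

/-- The right `B`-action on `N·e`, as a ring homomorphism `Bᵐᵒᵖ → End(N·e)`. -/
noncomputable def NeHom (N : ModuleCat Aᵐᵒᵖ) : Bᵐᵒᵖ →+* Module.End k ↥(NeSub k A e N) where
  toFun b :=
    { toFun := fun v => ⟨op (ι (unop b)) • v.1, by
        rw [(iota_mem_corner e ι hmul hone (unop b)).2]
        exact smul_e_mem_NeSub _ N v.1⟩
      map_add' := fun x y => Subtype.ext (by
        show op _ • ((x : N) + (y : N)) = op _ • (x : N) + op _ • (y : N)
        rw [smul_add])
      map_smul' := fun c x => Subtype.ext (by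
        show op _ • ((c • x : ↥(NeSub k A e N)) : N) = c • (op _ • (x : N))
        rw [Submodule.coe_smul, op_smul_comm_k]) }
  map_one' := by
    ext v
    show op (ι 1) • (v : N) = (v : N)
    rw [hone]
    exact e_smul_of_mem_NeSub he N v.2
  map_mul' x y := by
    ext v
    show op (ι (unop y * unop x)) • (v : N)
      = op (ι (unop x)) • (op (ι (unop y)) • (v : N))
    rw [hmul, smul_smul, ← op_mul]
  map_zero' := by
    ext v
    show op (ι 0) • (v : N) = 0
    rw [map_zero, op_zero, zero_smul]
  map_add' x y := by
    ext v
    show op (ι (unop x + unop y)) • (v : N)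
      = op (ι (unop x)) • (v : N) + op (ι (unop y)) • (v : N)
    rw [map_add, MulOpposite.op_add, add_smul]

/-- The right `B`-module structure on `N·e` (restriction along `B ⊆ eAe`). -/
noncomputable def NeModule (N : ModuleCat Aᵐᵒᵖ) : Module Bᵐᵒᵖ ↥(NeSub k A e N) :=
  Module.compHom _ (NeHom e he ι hmul hone N)

/-- The left `B`-action on `eA`, as a ring homomorphism `B → End(eA)`. -/
noncomputable def eAHom : B →+* Module.End k ↥(eASub k A e) where
  toFun b :=
    { toFun := fun x => ⟨ι b * x.1, by
        obtain ⟨c, hc⟩ := x.2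
        refine ⟨ι b * x.1, ?_⟩
        show e * (ι b * (x : A)) = ι b * (x : A)
        rw [← mul_assoc, ← (iota_mem_corner e ι hmul hone b).1]⟩
      map_add' := fun x y => Subtype.ext (by
        show ι b * ((x : A) + (y : A)) = ι b * (x : A) + ι b * (y : A)
        rw [mul_add])
      map_smul' := fun c x => Subtype.ext (by
        show ι b * (c • (x : A)) = c • (ι b * (x : A))
        rw [mul_smul_comm]) }
  map_one' := by
    ext x
    show ι 1 * (x : A) = (x : A)
    obtain ⟨c, hc⟩ := x.2
    rw [hone, ← hc]
    show e * (LinearMap.mulLeft k e c) = _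
    show e * (e * c) = e * c
    rw [← mul_assoc, he]
  map_mul' a b := by
    ext x
    show ι (a * b) * (x : A) = ι a * (ι b * (x : A))
    rw [hmul, mul_assoc]
  map_zero' := by
    ext x
    show ι 0 * (x : A) = 0
    rw [map_zero, zero_mul]
  map_add' a b := by
    ext x
    show ι (a + b) * (x : A) = ι a * (x : A) + ι b * (x : A)
    rw [map_add, add_mul]

/-- The left `B`-module structure on `eA`. -/
noncomputable def eAModule : Module B ↥(eASub k A e) :=
  Module.compHom _ (eAHom e he ι hmul hone)

end Infra

set_option linter.unusedSectionVars false
set_option linter.unusedVariables false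
set_option linter.style.haveILetI false

theorem ext_adj_iso (k : Type) [Field k] {C D : Type 1} [Category.{0} C] [Category.{0} D]
    [Abelian C] [Abelian D] [Linear k C] [Linear k D] [EnoughProjectives C] [EnoughProjectives D]
    {F : C ⥤ D} {G : D ⥤ C} (adj : F ⊣ G) [F.Additive] [G.Additive] [G.Linear k]
    [F.PreservesHomology] [F.PreservesProjectiveObjects] (X : C) (Y : D) (n : ℕ) :
    Nonempty ((((Ext k D n).obj (Opposite.op (F.obj X))).obj Y) ≅
      (((Ext k C n).obj (Opposite.op X)).obj (G.obj Y))) := by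
  obtain ⟨P⟩ := (inferInstance : HasProjectiveResolution X).out
  let Q := F.mapProjectiveResolution P
  let L : ∀ i, (F.obj (P.complex.X i) ⟶ Y) ≃ₗ[k] (P.complex.X i ⟶ G.obj Y) := fun i =>
    { adj.homEquiv (P.complex.X i) Y with
      map_add' := fun f g => by
        simp [Adjunction.homEquiv_unit]
      map_smul' := fun c f => by
        simp [Adjunction.homEquiv_unit] }
  have E : Q.complex.linearYonedaObj k Y ≅ P.complex.linearYonedaObj k (G.obj Y) := by
    refine HomologicalComplex.Hom.isoOfComponents (fun i => (L i).toModuleIso) ?_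
    intro i j hij
    ext f
    exact (adj.homEquiv_naturality_left (P.complex.d j i) f).symm
  exact ⟨Q.isoExt n Y ≪≫ (HomologicalComplex.homologyFunctor _ _ n).mapIso E ≪≫
    (P.isoExt n (G.obj Y)).symm⟩

section Dual

variable (k B E : Type) [Field k] [Ring B] [Algebra k B] [AddCommGroup E] [Module k E] [Module B E]
  [IsScalarTower k B E]

/-- The `k`-dual of a left `B`-module, as a right `B`-module. -/
def RDual (_ : Type) (k E : Type) [Field k] [AddCommGroup E] [Module k E] : Type := E →ₗ[k] k

noncomputable instance : AddCommGroup (RDual B k E) :=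
  inferInstanceAs (AddCommGroup (E →ₗ[k] k))

/-- Evaluation. -/
def RDual.ev {B k E : Type} [Field k] [AddCommGroup E] [Module k E] (φ : RDual B k E) :
    E →ₗ[k] k := φ

variable {B E} in
/-- Left multiplication by `b`. -/
def lmulE (b : B) : E →ₗ[k] E where
  toFun x := b • x
  map_add' x y := smul_add b x y
  map_smul' c x := smul_comm b c x

noncomputable instance rdualModule : Module Bᵐᵒᵖ (RDual B k E) where
  smul b φ := (φ.ev).comp (lmulE k (unop b))
  one_smul φ := LinearMap.ext fun x => congrArg φ.ev (one_smul B x)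
  mul_smul a b φ := LinearMap.ext fun x => congrArg φ.ev (mul_smul (unop b) (unop a) x)
  smul_zero a := LinearMap.ext fun x => rfl
  smul_add a φ ψ := LinearMap.ext fun x => rfl
  add_smul a b φ := LinearMap.ext fun x =>
    (congrArg φ.ev (add_smul (unop a) (unop b) x)).trans (map_add φ.ev _ _)
  zero_smul φ := LinearMap.ext fun x => (congrArg φ.ev (zero_smul B x)).trans (map_zero φ.ev)

variable {k B E}

theorem rdual_smul (b : Bᵐᵒᵖ) (φ : RDual B k E) (x : E) : (b • φ).ev x = φ.ev (unop b • x) := rfl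

variable (k B E) in
/-- Evaluation at a point is additive. -/
def evAt (x : E) : RDual B k E →+ k where
  toFun φ := φ.ev x
  map_zero' := rfl
  map_add' _ _ := rfl

theorem rdual_baer
    (hflat : ∀ (n : ℕ) (b : Fin n → B) (x : Fin n → E), (∑ i, b i • x i) = 0 →
      ∃ (m : ℕ) (c : Fin n → Fin m → B) (y : Fin m → E),
        (∀ i, x i = ∑ j, c i j • y j) ∧ (∀ j, (∑ i, b i * c i j) = 0)) :
    Module.Baer Bᵐᵒᵖ (RDual B k E) := by
  intro I g
  let Φ : (I →₀ E) →ₗ[k] E := Finsupp.lsum k fun b => lmulE k (unop b.1)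
  let Ψ : (I →₀ E) →ₗ[k] k := Finsupp.lsum k fun b => (g b).ev
  have hker : Ψ ∈ (LinearMap.ker Φ).dualAnnihilator := by
    rw [Submodule.mem_dualAnnihilator]
    intro s hs
    rw [LinearMap.mem_ker] at hs
    have h1 : ∑ b ∈ s.support, unop b.1 • s b = 0 := hs
    show ∑ b ∈ s.support, (g b).ev (s b) = 0
    let q := s.support.equivFin
    have key : ∀ {V : Type} [AddCommMonoid V] (f : I → V),
        ∑ b ∈ s.support, f b = ∑ i, f (q.symm i).1 := by
      intro V _ f
      rw [← Finset.sum_coe_sort]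
      exact (Equiv.sum_comp q.symm (fun b : s.support => f b.1)).symm
    rw [key] at h1 ⊢
    obtain ⟨m, c, y, hx, hc⟩ := hflat _ (fun i => unop (q.symm i).1.1) (fun i => s (q.symm i).1) h1
    have h2 : ∀ i, (g (q.symm i).1).ev (s (q.symm i).1)
        = ∑ j, evAt k B E (y j) (g (op (c i j) • (q.symm i).1)) := by
      intro i
      rw [hx i, map_sum]
      refine Finset.sum_congr rfl fun j _ => ?_
      rw [map_smul g]
      rfl
    simp_rw [h2]
    rw [Finset.sum_comm]
    refine Finset.sum_eq_zero fun j _ => ?_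
    rw [← map_sum, ← map_sum]
    have : ∑ i, op (c i j) • (q.symm i).1 = 0 := by
      apply Subtype.ext
      apply unop_injective
      simpa using hc j
    rw [this, map_zero, map_zero]
  rw [← LinearMap.range_dualMap_eq_dualAnnihilator_ker] at hker
  obtain ⟨h, hh⟩ := hker
  let h' : RDual B k E := h
  refine ⟨LinearMap.toSpanSingleton Bᵐᵒᵖ _ h', fun b hb => ?_⟩
  refine LinearMap.ext fun x => ?_
  have := LinearMap.congr_fun hh (Finsupp.single ⟨b, hb⟩ x)
  have e1 : Φ (Finsupp.single ⟨b, hb⟩ x) = unop b • x := by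
    simp [Φ, lmulE]
  have e2 : Ψ (Finsupp.single ⟨b, hb⟩ x) = (g ⟨b, hb⟩).ev x := by
    simp [Ψ]
  rw [e2, LinearMap.dualMap_apply, e1] at this
  exact this

end Dual

section Ten

open TensorProduct

variable {k A B E : Type} [Field k] [Ring A] [Algebra k A] [Ring B] [Algebra k B]
  [AddCommGroup E] [Module k E] [Module B E]
  [IsScalarTower k B E] [Module Aᵐᵒᵖ E] [IsScalarTower k Aᵐᵒᵖ E] [SMulCommClass Aᵐᵒᵖ B E]

variable (k A B E) in
/-- The balancing relations. -/
def tenRel (M : ModuleCat.{0} Bᵐᵒᵖ) : Submodule Aᵐᵒᵖ (E ⊗[k] M) :=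
  Submodule.span Aᵐᵒᵖ {z | ∃ (b : B) (x : E) (m : M), z = (b • x) ⊗ₜ[k] m - x ⊗ₜ[k] (op b • m)}

variable (k A B E) in
/-- The tensor product `M ⊗_B E`. -/
abbrev Ten (M : ModuleCat.{0} Bᵐᵒᵖ) : Type := (E ⊗[k] M) ⧸ tenRel k A B E M

theorem tenRel_le {M : ModuleCat.{0} Bᵐᵒᵖ} {V : Type} [AddCommGroup V] [Module k V]
    (g : E ⊗[k] M →ₗ[k] V)
    (hg : ∀ (b : B) (x : E) (m : M), g ((b • x) ⊗ₜ m) = g (x ⊗ₜ (op b • m)))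
    (z : E ⊗[k] M) (hz : z ∈ tenRel k A B E M) : g z = 0 := by
  suffices h : ∀ a : Aᵐᵒᵖ, g (a • z) = 0 by simpa using h 1
  induction hz using Submodule.span_induction with
  | mem w hw =>
    obtain ⟨b, x, m, rfl⟩ := hw
    intro a
    rw [smul_sub, smul_tmul', smul_tmul', smul_comm a b x, map_sub, hg, sub_self]
  | zero => simp
  | add x y _ _ hx hy => intro a; rw [smul_add, map_add, hx, hy, add_zero]
  | smul c x _ hx => intro a; rw [smul_smul]; exact hx _

theorem ten_bal (M : ModuleCat.{0} Bᵐᵒᵖ) (b : B) (x : E) (m : M) :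
    (tenRel k A B E M).mkQ ((b • x) ⊗ₜ m) = (tenRel k A B E M).mkQ (x ⊗ₜ (op b • m)) := by
  rw [← sub_eq_zero, ← map_sub]
  exact (Submodule.Quotient.mk_eq_zero _).2 (Submodule.subset_span ⟨b, x, m, rfl⟩)

theorem ten_inj
    (hB : Module.Baer Bᵐᵒᵖ (RDual B k E)) {M' M : ModuleCat.{0} Bᵐᵒᵖ} (f : M' →ₗ[Bᵐᵒᵖ] M)
    (hf : Function.Injective f) (z : E ⊗[k] M')
    (hz : (LinearMap.lTensor E (f.restrictScalars k)) z ∈ tenRel k A B E M) :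
    z ∈ tenRel k A B E M' := by
  by_contra hne
  obtain ⟨h, hz1, hz2⟩ := Submodule.exists_le_ker_of_notMem
    (p := (tenRel k A B E M').restrictScalars k) (v := z) hne
  have hbal : ∀ (b : B) (x : E) (m : M'), h ((b • x) ⊗ₜ m) = h (x ⊗ₜ (op b • m)) := by
    intro b x m
    rw [← sub_eq_zero, ← map_sub]
    exact hz2 (Submodule.subset_span ⟨b, x, m, rfl⟩)
  let φ : M' →ₗ[Bᵐᵒᵖ] RDual B k E :=
    { toFun := fun m => (TensorProduct.curry h).flip m
      map_add' := fun x y => map_add _ x y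
      map_smul' := fun b m => LinearMap.ext fun x => (hbal (unop b) x m).symm }
  obtain ⟨ψ, hψ⟩ := hB.injective.out f hf φ
  let h' : E ⊗[k] M →ₗ[k] k := TensorProduct.lift (LinearMap.flip
    { toFun := fun m => (ψ m).ev
      map_add' := fun x y => map_add ψ x y
      map_smul' := fun c m => by
        refine LinearMap.ext fun x => ?_
        rw [algebra_compatible_smul Bᵐᵒᵖ c m, map_smul, rdual_smul]
        have : unop (algebraMap k Bᵐᵒᵖ c) • x = c • x := by
          rw [MulOpposite.algebraMap_apply, unop_op, algebraMap_smul]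
        rw [this, map_smul]
        rfl })
  have hh' : ∀ x m, h' (x ⊗ₜ m) = (ψ m).ev x := fun x m => rfl
  have h0 : h' (LinearMap.lTensor E (f.restrictScalars k) z) = 0 := by
    refine tenRel_le (A := A) h' ?_ _ hz
    intro b x m
    rw [hh', hh', map_smul ψ]
    rfl
  apply hz1
  rw [← h0]
  have : h = h' ∘ₗ LinearMap.lTensor E (f.restrictScalars k) := by
    ext x m
    show h (x ⊗ₜ m) = (ψ (f m)).ev x
    rw [hψ]
    rfl
  exact LinearMap.congr_fun this z

end Ten

/-- A `(B, A)`-bimodule `E` identified with the right ideal `eA`. -/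
structure EData {k A B : Type} [Field k] [Ring A] [Algebra k A] [Ring B] [Algebra k B]
    (e : A) (ι : B →ₗ[k] A) (E : Type) [AddCommGroup E] [Module k E] [Module B E]
    [Module Aᵐᵒᵖ E] where
  /-- the inclusion -/
  j : E →ₗ[k] A
  hj : Function.Injective j
  hjB : ∀ (b : B) x, j (b • x) = ι b * j x
  hjA : ∀ (a : Aᵐᵒᵖ) x, j (a • x) = j x * unop a
  /-- the element `e` of `eA` -/
  e0 : E
  he0 : j e0 = e
  hej : ∀ x, e * j x = j x

section Adj

open TensorProduct

variable {k A B : Type} [Field k] [Ring A] [Algebra k A] [Ring B] [Algebra k B]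
  (e : A) (he : e * e = e) (ι : B →ₗ[k] A) (hmul : ∀ x y : B, ι (x * y) = ι x * ι y)
  (hone : ι 1 = e)

theorem mem_NeSub_of {e : A} (Y : ModuleCat.{0} Aᵐᵒᵖ) {v : Y} (h : op e • v = v) :
    v ∈ NeSub k A e Y :=
  Submodule.subset_span ⟨v, h.symm⟩

/-- The object `N·e` of the category of right `B`-modules. -/
noncomputable def GObj (Y : ModuleCat.{0} Aᵐᵒᵖ) : ModuleCat.{0} Bᵐᵒᵖ :=
  letI : Module Bᵐᵒᵖ ↥(NeSub k A e Y) := NeModule e he ι hmul hone Y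
  ModuleCat.of Bᵐᵒᵖ ↥(NeSub k A e Y)

/-- Inclusion of `N·e` into `N`. -/
def gval (Y : ModuleCat.{0} Aᵐᵒᵖ) (v : GObj e he ι hmul hone Y) : Y :=
  Subtype.val (p := fun v => v ∈ NeSub k A e Y) v

/-- Constructor for elements of `N·e`. -/
def gmk (Y : ModuleCat.{0} Aᵐᵒᵖ) (v : Y) (h : op e • v = v) : GObj e he ι hmul hone Y :=
  Subtype.mk (p := fun v => v ∈ NeSub k A e Y) v (mem_NeSub_of Y h)

theorem gval_gmk (Y : ModuleCat.{0} Aᵐᵒᵖ) (v : Y) (h : op e • v = v) :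
    gval e he ι hmul hone Y (gmk e he ι hmul hone Y v h) = v := rfl

theorem gval_inj (Y : ModuleCat.{0} Aᵐᵒᵖ) {v w : GObj e he ι hmul hone Y}
    (h : gval e he ι hmul hone Y v = gval e he ι hmul hone Y w) : v = w :=
  Subtype.ext h

theorem gval_e (Y : ModuleCat.{0} Aᵐᵒᵖ) (v : GObj e he ι hmul hone Y) :
    op e • gval e he ι hmul hone Y v = gval e he ι hmul hone Y v :=
  e_smul_of_mem_NeSub (k := k) he Y (Subtype.prop (p := fun v => v ∈ NeSub k A e Y) v)

theorem gval_add (Y : ModuleCat.{0} Aᵐᵒᵖ) (v w : GObj e he ι hmul hone Y) :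
    gval e he ι hmul hone Y (v + w) = gval e he ι hmul hone Y v + gval e he ι hmul hone Y w := rfl

theorem gval_smul (Y : ModuleCat.{0} Aᵐᵒᵖ) (b : Bᵐᵒᵖ) (v : GObj e he ι hmul hone Y) :
    gval e he ι hmul hone Y (b • v) = op (ι (unop b)) • gval e he ι hmul hone Y v := rfl

theorem gval_ksmul (Y : ModuleCat.{0} Aᵐᵒᵖ) (c : k) (v : GObj e he ι hmul hone Y) :
    gval e he ι hmul hone Y (c • v) = c • gval e he ι hmul hone Y v := by
  rw [algebra_compatible_smul Bᵐᵒᵖ c v, gval_smul, MulOpposite.algebraMap_apply, unop_op,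
    Algebra.algebraMap_eq_smul_one, map_smul, hone, op_smul, smul_assoc, gval_e]

/-- The functor `N ↦ N·e`. -/
noncomputable def GFun : ModuleCat.{0} Aᵐᵒᵖ ⥤ ModuleCat.{0} Bᵐᵒᵖ where
  obj Y := GObj e he ι hmul hone Y
  map {Y Z} f := ModuleCat.ofHom (X := GObj e he ι hmul hone Y) (Y := GObj e he ι hmul hone Z)
    { toFun := fun v => gmk e he ι hmul hone Z (f.hom (gval e he ι hmul hone Y v)) (by
        rw [← map_smul, gval_e])
      map_add' := fun v w => gval_inj e he ι hmul hone Z (by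
        simp only [gval_gmk, gval_add, map_add])
      map_smul' := fun b v => gval_inj e he ι hmul hone Z (by
        refine Eq.trans ?_ (gval_smul e he ι hmul hone Z b _).symm
        rw [gval_gmk, gval_gmk]
        exact map_smul f.hom (op (ι (unop b))) (gval e he ι hmul hone Y v)) }
  map_id Y := by ext v; rfl
  map_comp f g := by ext v; rfl

theorem gval_map {Y Z : ModuleCat.{0} Aᵐᵒᵖ} (f : Y ⟶ Z) (v : GObj e he ι hmul hone Y) :
    gval e he ι hmul hone Z (((GFun e he ι hmul hone).map f).hom v)
      = f.hom (gval e he ι hmul hone Y v) := rfl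

instance : (GFun e he ι hmul hone).Additive where
  map_add {Y Z f g} := by
    ext v
    exact gval_inj e he ι hmul hone Z rfl

instance : (GFun e he ι hmul hone).Linear k where
  map_smul {Y Z} f c := by
    ext v
    apply gval_inj e he ι hmul hone Z
    refine Eq.trans ?_ (gval_ksmul e he ι hmul hone Z c _).symm
    rfl

instance : (GFun e he ι hmul hone).PreservesEpimorphisms where
  preserves {Y Z} f hf := by
    rw [ModuleCat.epi_iff_surjective] at hf ⊢
    intro v
    obtain ⟨w, hw⟩ := hf (gval e he ι hmul hone Z v)
    refine ⟨gmk e he ι hmul hone Y (op e • w) (by rw [smul_smul, ← op_mul, he]), ?_⟩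
    apply gval_inj e he ι hmul hone Z
    refine (gval_map e he ι hmul hone f _).trans ?_
    rw [gval_gmk, map_smul]
    refine (congrArg _ hw).trans ?_
    exact gval_e e he ι hmul hone Z v

variable (E : Type) [AddCommGroup E] [Module k E] [Module B E]
  [IsScalarTower k B E] [Module Aᵐᵒᵖ E] [IsScalarTower k Aᵐᵒᵖ E] [SMulCommClass Aᵐᵒᵖ B E]

variable (k A B) in
/-- Pure tensors in `M ⊗_B E`. -/
def tm (M : ModuleCat.{0} Bᵐᵒᵖ) (x : E) (m : M) : Ten k A B E M :=
  (tenRel k A B E M).mkQ (x ⊗ₜ[k] m)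

theorem tm_smul (M : ModuleCat.{0} Bᵐᵒᵖ) (a : Aᵐᵒᵖ) (x : E) (m : M) :
    a • tm k A B E M x m = tm k A B E M (a • x) m := rfl

theorem tm_bal (M : ModuleCat.{0} Bᵐᵒᵖ) (b : B) (x : E) (m : M) :
    tm k A B E M (b • x) m = tm k A B E M x (op b • m) := ten_bal M b x m

theorem tm_add (M : ModuleCat.{0} Bᵐᵒᵖ) (x : E) (m m' : M) :
    tm k A B E M x (m + m') = tm k A B E M x m + tm k A B E M x m' := by
  simp only [tm, tmul_add, map_add]

/-- Lifting balanced equivariant maps. -/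
noncomputable def tlift {M : ModuleCat.{0} Bᵐᵒᵖ} {Y : ModuleCat.{0} Aᵐᵒᵖ}
    (γ : E →ₗ[k] M →ₗ[k] Y) (hγB : ∀ (b : B) x m, γ (b • x) m = γ x (op b • m))
    (hγA : ∀ (a : Aᵐᵒᵖ) x m, γ (a • x) m = a • γ x m) : Ten k A B E M →ₗ[Aᵐᵒᵖ] Y :=
  (tenRel k A B E M).liftQ
    { TensorProduct.lift γ with
      map_smul' := fun a z => by
        show TensorProduct.lift γ (a • z) = a • TensorProduct.lift γ z
        induction z using TensorProduct.induction_on with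
        | zero => simp
        | tmul x m => rw [smul_tmul', lift.tmul, lift.tmul, hγA]
        | add x y hx hy => rw [smul_add, map_add, hx, hy, map_add, smul_add] }
    (fun z hz => tenRel_le (A := A) (TensorProduct.lift γ) (fun b x m => hγB b x m) z hz)

theorem tlift_tm {M : ModuleCat.{0} Bᵐᵒᵖ} {Y : ModuleCat.{0} Aᵐᵒᵖ}
    (γ : E →ₗ[k] M →ₗ[k] Y) (hγB : ∀ (b : B) x m, γ (b • x) m = γ x (op b • m))
    (hγA : ∀ (a : Aᵐᵒᵖ) x m, γ (a • x) m = a • γ x m) (x : E) (m : M) :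
    tlift E γ hγB hγA (tm k A B E M x m) = γ x m := rfl

theorem ten_ext {M : ModuleCat.{0} Bᵐᵒᵖ} {Y : Type} [AddCommGroup Y] [Module Aᵐᵒᵖ Y]
    {f g : Ten k A B E M →ₗ[Aᵐᵒᵖ] Y} (h : ∀ x m, f (tm k A B E M x m) = g (tm k A B E M x m)) :
    f = g := by
  apply LinearMap.ext
  intro z
  obtain ⟨z, rfl⟩ := (tenRel k A B E M).mkQ_surjective z
  induction z using TensorProduct.induction_on with
  | zero => simp
  | tmul x m => exact h x m
  | add x y hx hy => simp only [map_add, hx, hy]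

variable {E} (d : EData e ι E)

theorem e0_smul (x : E) : op (d.j x) • d.e0 = x := d.hj (by rw [d.hjA, d.he0, unop_op, d.hej])

/-- The bilinear map corresponding to `M → N·e`. -/
noncomputable def gam {M : ModuleCat.{0} Bᵐᵒᵖ} {Y : ModuleCat.{0} Aᵐᵒᵖ}
    (ψ : M →ₗ[Bᵐᵒᵖ] GObj e he ι hmul hone Y) : E →ₗ[k] M →ₗ[k] Y :=
  LinearMap.mk₂ k (fun x m => op (d.j x) • gval e he ι hmul hone Y (ψ m))
    (fun x y m => by rw [map_add, MulOpposite.op_add, add_smul])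
    (fun c x m => by rw [map_smul, op_smul, smul_assoc])
    (fun x m m' => by rw [map_add, gval_add, smul_add])
    (fun c x m => by
      have : ψ (c • m) = c • ψ m := (ψ.restrictScalars k).map_smul c m
      rw [this, gval_ksmul, op_smul_comm_k])

/-- The tensor-hom adjunction. -/
noncomputable def tadj (M : ModuleCat.{0} Bᵐᵒᵖ) (Y : ModuleCat.{0} Aᵐᵒᵖ) :
    (ModuleCat.of Aᵐᵒᵖ (Ten k A B E M) ⟶ Y) ≃ (M ⟶ (GFun e he ι hmul hone).obj Y) where
  toFun φ := ModuleCat.ofHom (Y := GObj e he ι hmul hone Y)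
    { toFun := fun m => gmk e he ι hmul hone Y (φ.hom (tm k A B E M d.e0 m)) (by
        rw [← map_smul]
        congr 1
        refine (tm_smul E M (op e) d.e0 m).trans ?_
        congr 1
        apply d.hj
        rw [d.hjA, d.he0, unop_op, he])
      map_add' := fun m m' => gval_inj e he ι hmul hone Y (by
        simp only [gval_add, gval_gmk]
        rw [← map_add, ← tm_add])
      map_smul' := fun b m => gval_inj e he ι hmul hone Y (by
        refine Eq.trans ?_ (gval_smul e he ι hmul hone Y b _).symm
        rw [gval_gmk, gval_gmk, ← map_smul]
        congr 1
        refine (tm_bal E M (unop b) d.e0 m).symm.trans ?_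
        refine Eq.trans ?_ (tm_smul E M _ d.e0 m).symm
        congr 1
        apply d.hj
        rw [d.hjB, d.hjA, d.he0, unop_op, ← (iota_mem_corner e ι hmul hone _).1,
          ← (iota_mem_corner e ι hmul hone _).2]) }
  invFun ψ := ModuleCat.ofHom (tlift E (gam e he ι hmul hone d ψ.hom)
    (fun b x m => by
      show op (d.j (b • x)) • gval e he ι hmul hone Y (ψ.hom m)
        = op (d.j x) • gval e he ι hmul hone Y (ψ.hom (op b • m))
      rw [map_smul ψ.hom, d.hjB, op_mul, ← smul_smul]
      congr 1)
    (fun a x m => by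
      show op (d.j (a • x)) • gval e he ι hmul hone Y (ψ.hom m)
        = a • op (d.j x) • gval e he ι hmul hone Y (ψ.hom m)
      rw [d.hjA, op_mul, ← smul_smul, op_unop]))
  left_inv φ := by
    apply ModuleCat.hom_ext
    apply ten_ext
    intro x m
    show op (d.j x) • φ.hom (tm k A B E M d.e0 m) = φ.hom (tm k A B E M x m)
    rw [← map_smul]
    congr 1
    refine (tm_smul E M _ d.e0 m).trans ?_
    rw [e0_smul e ι d]
  right_inv ψ := by
    ext m
    apply gval_inj e he ι hmul hone Y
    show op (d.j d.e0) • gval e he ι hmul hone Y (ψ.hom m) = gval e he ι hmul hone Y (ψ.hom m)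
    rw [d.he0]
    exact gval_e e he ι hmul hone Y _

/-- The functor `M ↦ M ⊗_B E`. -/
noncomputable def FFun : ModuleCat.{0} Bᵐᵒᵖ ⥤ ModuleCat.{0} Aᵐᵒᵖ :=
  Adjunction.leftAdjointOfEquiv (G := GFun e he ι hmul hone)
    (F_obj := fun M => ModuleCat.of Aᵐᵒᵖ (Ten k A B E M))
    (tadj e he ι hmul hone d) (fun X Y Y' g h => rfl)

/-- The adjunction. -/
noncomputable def FGadj : FFun e he ι hmul hone d ⊣ GFun e he ι hmul hone :=
  Adjunction.adjunctionOfEquivLeft _ _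

theorem FFun_map {M M' : ModuleCat.{0} Bᵐᵒᵖ} (f : M ⟶ M') (x : E) (m : M) :
    ((FFun e he ι hmul hone d).map f).hom (tm k A B E M x m)
      = tm k A B E M' x (f.hom m) := by
  show op (d.j x) • tm k A B E M' d.e0 (f.hom m) = _
  rw [tm_smul, e0_smul e ι d]

theorem FFun_mono (hB : Module.Baer Bᵐᵒᵖ (RDual B k E)) :
    (FFun e he ι hmul hone d).PreservesMonomorphisms where
  preserves {M M'} f hf := by
    rw [ModuleCat.mono_iff_injective] at hf ⊢
    rw [injective_iff_map_eq_zero]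
    intro z hz
    obtain ⟨z, rfl⟩ := (tenRel k A B E M).mkQ_surjective z
    refine (Submodule.Quotient.mk_eq_zero _).2 (ten_inj hB f.hom hf z ?_)
    rw [← Submodule.Quotient.mk_eq_zero]
    refine Eq.trans ?_ hz
    clear hz
    show (tenRel k A B E M').mkQ _ =
      ((FFun e he ι hmul hone d).map f).hom ((tenRel k A B E M).mkQ z)
    induction z using TensorProduct.induction_on with
    | zero => rw [map_zero, map_zero]; exact (map_zero _).symm
    | tmul x m => exact (FFun_map e he ι hmul hone d f x m).symm
    | add x y hx hy =>
      rw [map_add, map_add, hx, hy, map_add]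
      exact (map_add _ _ _).symm

theorem shapiro (d : EData e ι E) (hB : Module.Baer Bᵐᵒᵖ (RDual B k E)) (M : ModuleCat.{0} Bᵐᵒᵖ)
    (N : ModuleCat.{0} Aᵐᵒᵖ) (n : ℕ) :
    Nonempty
      ((((Ext k (ModuleCat Aᵐᵒᵖ) n).obj (Opposite.op (ModuleCat.of Aᵐᵒᵖ (Ten k A B E M)))).obj N) ≅
        (((Ext k (ModuleCat Bᵐᵒᵖ) n).obj (Opposite.op M)).obj (GObj e he ι hmul hone N))) := by
  let F := FFun e he ι hmul hone d
  let G := GFun e he ι hmul hone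
  let adj : F ⊣ G := FGadj e he ι hmul hone d
  have : F.Additive := adj.left_adjoint_additive
  have : F.PreservesMonomorphisms := FFun_mono e he ι hmul hone d hB
  have : Limits.PreservesColimitsOfSize.{0, 0} F := adj.leftAdjoint_preservesColimits
  have : F.PreservesHomology := F.preservesHomology_of_preservesMonos_and_cokernels
  have : F.PreservesProjectiveObjects := ⟨fun {P} hP => adj.map_projective P hP⟩
  exact ext_adj_iso k adj M N n

theorem ten_iso (M : ModuleCat.{0} Bᵐᵒᵖ) (T : ModuleCat.{0} Aᵐᵒᵖ) (β : M →ₗ[k] (E →ₗ[k] T))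
    (hbal : ∀ (b : B) (m : M) (x : E), β (op b • m) x = β m (b • x))
    (hequiv : ∀ (a : Aᵐᵒᵖ) (m : M) (x : E), β m (a • x) = a • β m x)
    (huniv : ∀ (γ : M →ₗ[k] (E →ₗ[k] k)),
      (∀ (b : B) (m : M) (x : E), γ (op b • m) x = γ m (b • x)) →
      ∃! g : ↥T →ₗ[k] k, ∀ (m : M) (x : E), g (β m x) = γ m x) :
    Nonempty (ModuleCat.of Aᵐᵒᵖ (Ten k A B E M) ≅ T) := by
  let φ : Ten k A B E M →ₗ[Aᵐᵒᵖ] T := tlift E β.flip (fun b x m => (hbal b m x).symm)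
    (fun a x m => hequiv a m x)
  have hφ : ∀ x m, φ (tm k A B E M x m) = β m x := fun x m => rfl
  have hsurj : Function.Surjective φ := by
    rw [← LinearMap.range_eq_top, eq_top_iff]
    intro t _
    by_contra ht
    obtain ⟨h, h1, h2⟩ := Submodule.exists_le_ker_of_notMem
      (p := (LinearMap.range φ).restrictScalars k) (v := t) ht
    obtain ⟨g, -, hg⟩ := huniv 0 (fun b m x => rfl)
    have e1 := hg h (fun m x => h2 ⟨tm k A B E M x m, hφ x m⟩)
    have e2 := hg 0 (fun m x => rfl)
    apply h1
    rw [e1, ← e2]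
    rfl
  have hinj : Function.Injective φ := by
    rw [injective_iff_map_eq_zero]
    intro z hz
    obtain ⟨z, rfl⟩ := (tenRel k A B E M).mkQ_surjective z
    refine (Submodule.Quotient.mk_eq_zero _).2 ?_
    by_contra hne
    obtain ⟨h, h1, h2⟩ := Submodule.exists_le_ker_of_notMem
      (p := (tenRel k A B E M).restrictScalars k) (v := z) hne
    obtain ⟨g, hg, -⟩ := huniv (TensorProduct.curry h).flip (fun b m x => by
      show h (x ⊗ₜ (op b • m)) = h ((b • x) ⊗ₜ m)
      symm
      rw [← sub_eq_zero, ← map_sub]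
      exact h2 (Submodule.subset_span ⟨b, x, m, rfl⟩))
    have e1 : h = g ∘ₗ TensorProduct.lift β.flip := by
      ext x m
      exact (hg m x).symm
    apply h1
    rw [e1, LinearMap.comp_apply]
    have : TensorProduct.lift β.flip z = 0 := hz
    rw [this, map_zero]
  exact ⟨(LinearEquiv.ofBijective φ ⟨hinj, hsurj⟩).toModuleIso⟩

end Adj


section Inst

variable {k A : Type} [Field k] [Ring A] [Algebra k A]

/-- The right `A`-module structure on `eA`. -/
@[reducible]
noncomputable def eARight (e : A) : Module Aᵐᵒᵖ ↥(eASub k A e) where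
  smul a x := ⟨x.1 * unop a, by
    obtain ⟨c, hc⟩ := x.2
    refine ⟨c * unop a, ?_⟩
    rw [← hc]
    exact (mul_assoc e c (unop a)).symm⟩
  one_smul x := Subtype.ext (mul_one x.1)
  mul_smul a b x := Subtype.ext (mul_assoc x.1 (unop b) (unop a)).symm
  smul_zero a := Subtype.ext (zero_mul (unop a))
  smul_add a x y := Subtype.ext (add_mul x.1 y.1 (unop a))
  add_smul a b x := Subtype.ext (mul_add x.1 (unop a) (unop b))
  zero_smul x := Subtype.ext (mul_zero x.1)

end Inst

/-- Eckmann–Shapiro, induction: let `B` be a unital subalgebra of `eAe`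
with identity `e` (realized by the injective multiplicative unit-preserving `k`-linear
map `ι : B → A` with `ι 1 = e`), `M` a right `B`-module and `N` a right `A`-module.
The right `A`-module `T`, equipped with the balanced `A`-equivariant universal bilinear
map `β`, is `M ⊗_B eA`.  If `eA` is flat as a left `B`-module (expressed by the standard
equational criterion for flatness, `hflat`), then for all `n ≥ 0`,
`Ext^n_A(M ⊗_B eA, N) ≅ Ext^n_B(M, N·e)`. -/
theorem stmt6 (k A B : Type) [Field k] [Ring A] [Algebra k A] [Ring B] [Algebra k B]
    (e : A) (he : e * e = e)
    (ι : B →ₗ[k] A) (hmul : ∀ x y : B, ι (x * y) = ι x * ι y) (hone : ι 1 = e)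
    (hinj : Function.Injective ι)
    (M : ModuleCat Bᵐᵒᵖ) (N T : ModuleCat Aᵐᵒᵖ)
    (β : M →ₗ[k] (↥(eASub k A e) →ₗ[k] T))
    (hbal : ∀ (b : B) (m : M) (x y : ↥(eASub k A e)), (y : A) = ι b * (x : A) →
      β (op b • m) x = β m y)
    (hequiv : ∀ (a : A) (m : M) (x y : ↥(eASub k A e)), (y : A) = (x : A) * a →
      β m y = op a • β m x)
    (huniv : ∀ (V : Type) [AddCommGroup V] [Module k V]
      (γ : M →ₗ[k] (↥(eASub k A e) →ₗ[k] V)),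
      (∀ (b : B) (m : M) (x y : ↥(eASub k A e)), (y : A) = ι b * (x : A) →
        γ (op b • m) x = γ m y) →
      ∃! g : ↥T →ₗ[k] V, ∀ (m : M) (x : ↥(eASub k A e)), g (β m x) = γ m x)
    (hflat : ∀ (n : ℕ) (b : Fin n → B) (x : Fin n → ↥(eASub k A e)),
      (∑ i, ι (b i) * ((x i : A))) = 0 →
      ∃ (m : ℕ) (c : Fin n → Fin m → B) (y : Fin m → ↥(eASub k A e)),
        (∀ i, ((x i : A)) = ∑ j, ι (c i j) * ((y j : A))) ∧
        (∀ j, (∑ i, b i * c i j) = 0))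
    (n : ℕ) :
    letI : Module Bᵐᵒᵖ ↥(NeSub k A e N) := NeModule e he ι hmul hone N
    Nonempty
      ((((Ext k (ModuleCat Aᵐᵒᵖ) n).obj (Opposite.op T)).obj N) ≅
        (((Ext k (ModuleCat Bᵐᵒᵖ) n).obj (Opposite.op M)).obj
          (ModuleCat.of Bᵐᵒᵖ ↥(NeSub k A e N)))) := by
  letI iB : Module B ↥(eASub k A e) := eAModule e he ι hmul hone
  letI iA : Module Aᵐᵒᵖ ↥(eASub k A e) := eARight e
  have hB : ∀ (b : B) (x : ↥(eASub k A e)), ((b • x : ↥(eASub k A e)) : A) = ι b * x :=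
    fun b x => rfl
  have hA : ∀ (a : Aᵐᵒᵖ) (x : ↥(eASub k A e)), ((a • x : ↥(eASub k A e)) : A) = x * unop a :=
    fun b x => rfl
  have : IsScalarTower k B ↥(eASub k A e) := ⟨fun c b x => Subtype.ext (by
    rw [hB, Submodule.coe_smul, hB, map_smul, smul_mul_assoc])⟩
  have : IsScalarTower k Aᵐᵒᵖ ↥(eASub k A e) := ⟨fun c a x => Subtype.ext (by
    rw [hA, Submodule.coe_smul, hA, unop_smul, mul_smul_comm])⟩
  have : SMulCommClass Aᵐᵒᵖ B ↥(eASub k A e) := ⟨fun a b x => Subtype.ext (by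
    rw [hA, hB, hB, hA, mul_assoc])⟩
  let d : EData e ι ↥(eASub k A e) :=
    { j := (eASub k A e).subtype
      hj := Subtype.val_injective
      hjB := hB
      hjA := hA
      e0 := ⟨e, e, he⟩
      he0 := rfl
      hej := fun x => by
        obtain ⟨c, hc⟩ := x.2
        show e * (x : A) = (x : A)
        rw [← hc]
        show e * (e * c) = e * c
        rw [← mul_assoc, he] }
  obtain ⟨i⟩ := ten_iso (A := A) (B := B) (E := ↥(eASub k A e)) M T β
    (fun b m x => hbal b m x _ (hB b x))
    (fun a m x => hequiv (unop a) m x _ (hA a x))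
    (fun γ hγ => huniv k γ (fun b m x y hy => by
      rw [hγ]
      congr 1
      exact Subtype.ext hy.symm))
  have baer : Module.Baer Bᵐᵒᵖ (RDual B k ↥(eASub k A e)) := by
    apply rdual_baer
    intro n b x h
    obtain ⟨m, c, y, h1, h2⟩ := hflat n b x (by
      have := congrArg (eASub k A e).subtype h
      rw [map_sum, map_zero] at this
      exact this)
    refine ⟨m, c, y, fun i => Subtype.ext ?_, h2⟩
    rw [h1 i]
    exact (map_sum (eASub k A e).subtype (fun j => c i j • y j) Finset.univ).symm
  obtain ⟨s⟩ := shapiro e he ι hmul hone d baer M N n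
  exact ⟨(((Ext k (ModuleCat Aᵐᵒᵖ) n).mapIso i.op).app N) ≪≫ s⟩
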